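/- Let g : ℝ → ℝ be infinitely differentiable (C^∞) and define f(λ) = 1 − √(λ/(2−λ)) · g(2λ − λ²) for λ ∈ (0,2). Then for every integer n ≥ 0: f^{(2n)}(1) − (1/(2n+1)) · f^{(2n+1)}(1) equals 1 if n = 0, and equals 0 if n ≥ 1, where f^{(k)}(1) denotes the k-th derivative of f at λ = 1. -/

import Mathlib

lemma aux_mul (h : ℝ → ℝ) (k : ℕ) (hh : ContDiffAt ℝ (⊤ : ℕ∞) h 1) :
    iteratedDeriv (k + 1) (fun l : ℝ => l * h l) 1
      = iteratedDeriv (k + 1) h 1 + ((k : ℝ) + 1) * iteratedDeriv k h 1 := by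
  have hk : ContDiffAt ℝ ((k + 1 : ℕ) : WithTop ℕ∞) h 1 :=
    hh.of_le (by exact_mod_cast le_top)
  rw [iteratedDeriv_fun_mul contDiffAt_fun_id hk, Finset.sum_range_succ', Finset.sum_range_succ']
  rw [Finset.sum_eq_zero]
  · simp [iteratedDeriv_fun_id]
    ring
  · intro i _
    simp [iteratedDeriv_fun_id]

lemma aux_odd (h : ℝ → ℝ) (hs : ∀ l, h (2 - l) = h l) (n : ℕ) :
    iteratedDeriv (2 * n + 1) h 1 = 0 := by
  have h1 := congrFun (iteratedDeriv_comp_const_sub (2 * n + 1) h (2 : ℝ)) 1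
  have h2 : (fun z => h (2 - z)) = h := funext hs
  rw [h2] at h1
  have h3 : (2 : ℝ) - 1 = 1 := by norm_num
  simp only [h3, pow_succ, pow_mul] at h1
  norm_num at h1
  linarith

/-- Lemma 2: for f(λ) = 1 - √(λ/(2-λ))·g(2λ-λ²),
f^{(2n)}(1) - f^{(2n+1)}(1)/(2n+1) equals 1 for n = 0 and 0 for n ≥ 1. -/
theorem stmt_6 (g : ℝ → ℝ) (hg : ContDiff ℝ (⊤ : ℕ∞) g) (n : ℕ) :
    iteratedDeriv (2 * n)
        (fun l : ℝ => 1 - Real.sqrt (l / (2 - l)) * g (2 * l - l ^ 2)) 1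
      - (1 / (2 * (n : ℝ) + 1)) *
        iteratedDeriv (2 * n + 1)
          (fun l : ℝ => 1 - Real.sqrt (l / (2 - l)) * g (2 * l - l ^ 2)) 1
      = if n = 0 then 1 else 0 := by
  obtain ⟨h, hdef⟩ : ∃ h : ℝ → ℝ,
      h = fun l => g (2 * l - l ^ 2) / Real.sqrt (2 * l - l ^ 2) := ⟨_, rfl⟩
  have hs : ∀ l, h (2 - l) = h l := by
    intro l
    have : 2 * (2 - l) - (2 - l) ^ 2 = 2 * l - l ^ 2 := by ring
    simp only [hdef, this]
  have hsm : ContDiffAt ℝ (⊤ : ℕ∞) h 1 := by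
    have hp : ContDiffAt ℝ (⊤ : ℕ∞) (fun l : ℝ => 2 * l - l ^ 2) 1 := by fun_prop
    rw [hdef]
    refine ContDiffAt.div (hg.contDiffAt.comp (1 : ℝ) hp) (hp.sqrt (by norm_num)) ?_
    norm_num
  have heq : (fun l : ℝ => 1 - Real.sqrt (l / (2 - l)) * g (2 * l - l ^ 2))
      =ᶠ[nhds 1] (fun l => 1 - l * h l) := by
    filter_upwards [Ioo_mem_nhds (show (0 : ℝ) < 1 by norm_num) (show (1 : ℝ) < 2 by norm_num)]
      with l hl
    have h0 : 0 < l := hl.1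
    have h2 : 0 < 2 - l := by linarith [hl.2]
    have e : l / (2 - l) = l ^ 2 / (2 * l - l ^ 2) := by
      have : 2 * l - l ^ 2 = l * (2 - l) := by ring
      rw [this]
      field_simp
    rw [e, Real.sqrt_div (sq_nonneg l), Real.sqrt_sq h0.le, hdef]
    ring
  rw [heq.iteratedDeriv_eq, heq.iteratedDeriv_eq]
  have key : ∀ k, iteratedDeriv (k + 1) (fun l : ℝ => 1 - l * h l) 1
      = -(iteratedDeriv (k + 1) h 1 + ((k : ℝ) + 1) * iteratedDeriv k h 1) := by
    intro k
    rw [iteratedDeriv_const_sub (Nat.succ_pos k), iteratedDeriv_neg, aux_mul h k hsm]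
  rw [key, aux_odd h hs]
  have hn : (2 * (n : ℝ) + 1) ≠ 0 := by positivity
  rcases n with _ | m
  · simp
  · have e : 2 * (m + 1) = (2 * m + 1) + 1 := by ring
    have k2 := key (2 * m + 1)
    rw [aux_odd h hs, ← e] at k2
    rw [k2]
    push_cast at hn ⊢
    simp
    field_simp
    ring
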